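/- Let X and Y be finite nonempty types, let P and Q be probability mass functions on X × Y with Q(x,y) > 0 for every (x,y) and equal marginals on X (for every x, Σ_y P(x,y) = Σ_y Q(x,y)), and let r : X × Y → ℝ satisfy 0 < r(x,y) ≤ 1 for all (x,y). Let (Ω, μ) be a probability space and let (ξ_i)_{i∈ℕ}, ξ_i : Ω → X × Y, be independent random variables, each distributed according to Q (i.e., μ(ξ_i = z) = Q(z) for every z and every i). Define the weight w(x,y) := (P(x,y)/P_X(x)) · (Q_X(x)/Q(x,y)), where P_X(x) := Σ_y P(x,y) and Q_X(x) := Σ_y Q(x,y), and the empirical importance-weighted loss L_N(ω) := -(1/N) Σ_{i=0}^{N-1} w(ξ_i(ω)) · log r(ξ_i(ω)). Then L_N converges in probability to the real-world expected cross-entropy: for every ε > 0, μ{ω : |L_N(ω) - Σ_{(x,y)} P(x,y) · (-log r(x,y))| ≥ ε} → 0 as N → ∞. -/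

import Mathlib

open Finset MeasureTheory Filter

open ProbabilityTheory in
/-- Weak law of large numbers for functions of i.i.d. samples on a finite type. -/
theorem weak_law_finite {Z : Type*} [Fintype Z] [MeasurableSpace Z] [MeasurableSingletonClass Z]
    (Q : Z → ℝ) (hQ0 : ∀ z, 0 < Q z) (f : Z → ℝ)
    {Ω : Type*} [MeasurableSpace Ω] (μ : Measure Ω) [IsProbabilityMeasure μ]
    (ξ : ℕ → Ω → Z) (hmeas : ∀ i, Measurable (ξ i)) (hindep : iIndepFun ξ μ)
    (hdist : ∀ i, ∀ z : Z, μ (ξ i ⁻¹' {z}) = ENNReal.ofReal (Q z)) (ε : ℝ) (hε : 0 < ε) :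
    Tendsto (fun N : ℕ => μ {ω : Ω | ε ≤ |(∑ i ∈ Finset.range N, f (ξ i ω)) / (N : ℝ)
      - ∑ z : Z, Q z * f z|}) atTop (nhds 0) := by
  have hf : Measurable f := measurable_of_finite f
  have hmap : ∀ i, μ.map (ξ i) = μ.map (ξ 0) := by
    intro i
    refine Measure.ext_of_singleton fun z => ?_
    rw [Measure.map_apply (hmeas i) (measurableSet_singleton z),
      Measure.map_apply (hmeas 0) (measurableSet_singleton z), hdist, hdist]
  have hident : ∀ i, IdentDistrib (fun ω => f (ξ i ω)) (fun ω => f (ξ 0 ω)) μ μ := fun i =>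
    (IdentDistrib.mk (hmeas i).aemeasurable (hmeas 0).aemeasurable (hmap i)).comp hf
  have : IsProbabilityMeasure (μ.map (ξ 0)) :=
    Measure.isProbabilityMeasure_map (hmeas 0).aemeasurable
  have hint0 : Integrable f (μ.map (ξ 0)) := Integrable.of_finite
  have hint : Integrable (fun ω => f (ξ 0 ω)) μ := hint0.comp_measurable (hmeas 0)
  have hexp : ∫ ω, f (ξ 0 ω) ∂μ = ∑ z : Z, Q z * f z := by
    rw [← integral_map (hmeas 0).aemeasurable hf.aestronglyMeasurable, integral_fintype hint0]
    refine Finset.sum_congr rfl fun z _ => ?_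
    rw [measureReal_def, Measure.map_apply (hmeas 0) (measurableSet_singleton z), hdist,
      ENNReal.toReal_ofReal (hQ0 z).le, smul_eq_mul]
  have hslln := strong_law_ae_real (fun i ω => f (ξ i ω)) hint
    (fun i j hij => (hindep.indepFun hij).comp hf hf) hident
  rw [hexp] at hslln
  have hT := tendstoInMeasure_of_tendsto_ae
    (f := fun (N : ℕ) ω => (∑ i ∈ Finset.range N, f (ξ i ω)) / (N : ℝ))
    (g := fun _ => ∑ z : Z, Q z * f z) (fun n => by
      have : Measurable (fun ω => (∑ i ∈ Finset.range n, f (ξ i ω)) / (n : ℝ)) :=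
        (Finset.measurable_fun_sum _ fun i _ => hf.comp (hmeas i)).div_const _
      exact this.aestronglyMeasurable) hslln
  exact tendstoInMeasure_iff_norm.1 hT ε hε

/-- Asymptotic convergence of the Importance Loss (IMP-Loss): the empirical weighted
cross-entropy computed on i.i.d. samples from the synthetic distribution `Q` converges
in probability to the expected cross-entropy under the real-world distribution `P`. -/
theorem imp_loss_convergence_in_probability
    {X Y : Type*} [Fintype X] [Fintype Y] [Nonempty X] [Nonempty Y]
    (P Q : X × Y → ℝ)
    (hP0 : ∀ z, 0 ≤ P z) (hP1 : ∑ z : X × Y, P z = 1)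
    (hQ0 : ∀ z, 0 < Q z) (hQ1 : ∑ z : X × Y, Q z = 1)
    (hmarg : ∀ x : X, ∑ y : Y, P (x, y) = ∑ y : Y, Q (x, y))
    (r : X × Y → ℝ) (hr0 : ∀ z, 0 < r z) (hr1 : ∀ z, r z ≤ 1)
    {Ω : Type*} [MeasurableSpace Ω] (μ : Measure Ω) [IsProbabilityMeasure μ]
    (ξ : ℕ → Ω → X × Y)
    (hmeas : ∀ i, @Measurable Ω (X × Y) _ ⊤ (ξ i))
    (hindep : ProbabilityTheory.iIndepFun (m := fun _ => (⊤ : MeasurableSpace (X × Y))) ξ μ)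
    (hdist : ∀ i, ∀ z : X × Y, μ (ξ i ⁻¹' {z}) = ENNReal.ofReal (Q z)) :
    ∀ ε : ℝ, 0 < ε →
      Tendsto
        (fun N : ℕ =>
          μ {ω : Ω |
              ε ≤ |(-(1 / (N : ℝ)) * ∑ i ∈ Finset.range N,
                      ((P (ξ i ω) / ∑ y : Y, P ((ξ i ω).1, y))
                          * ((∑ y : Y, Q ((ξ i ω).1, y)) / Q (ξ i ω)))
                        * Real.log (r (ξ i ω)))
                  - ∑ z : X × Y, P z * (-Real.log (r z))|})
        atTop (nhds 0) := by
  intro ε hε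
  have h := @weak_law_finite (X × Y) _ ⊤ (@MeasurableSingletonClass.mk _ ⊤ fun _ => trivial) Q hQ0
    (fun z => -(((P z / ∑ y : Y, P (z.1, y)) * ((∑ y : Y, Q (z.1, y)) / Q z)) * Real.log (r z)))
    Ω _ μ _ ξ hmeas hindep hdist ε hε
  have hsum : ∑ z : X × Y, Q z *
      -(((P z / ∑ y : Y, P (z.1, y)) * ((∑ y : Y, Q (z.1, y)) / Q z)) * Real.log (r z))
      = ∑ z : X × Y, P z * (-Real.log (r z)) := by
    refine Finset.sum_congr rfl fun z _ => ?_
    have hpos : 0 < ∑ y : Y, Q (z.1, y) :=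
      Finset.sum_pos (fun y _ => hQ0 _) Finset.univ_nonempty
    have hz := hQ0 z
    rw [hmarg]
    field_simp
  rw [hsum] at h
  refine h.congr fun N => ?_
  congr 1
  ext ω
  simp only [Set.mem_setOf_eq, Finset.sum_neg_distrib]
  rw [show ∀ a : ℝ, -a / (N : ℝ) = -(1 / (N : ℝ)) * a from fun a => by ring]
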